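/- Let n ≥ 3 be an integer and let A_n be the alternating group of degree n. Then 𝒥(A_n) ≤ 11/6, with equality if and only if n = 4; moreover 𝒥(A_n) < 4/3 for all n ≥ 9. -/

import Mathlib

/-!
Every index of a subgroup of `A_n` is controlled by the way the subgroup `G` acts on the `n` points
(`altIdx_cases`). If `G` fixes a point, its index is `n` times an index for `A_{n-1}`. If `G` is
intransitive without fixed points, its index is a multiple of `n.choose k` for some `2 ≤ k ≤ n/2`
(`choose_dvd_of_invariant`). If `G` is transitive but imprimitive, its index is a multiple of the
number of partitions of the points into equal blocks (`uniformBell_dvd_of_block`). If `G` is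
primitive and proper, its index `m` satisfies Bochert's bound `⌈n/2⌉! ≤ 2m` (`bochert`), and every
odd prime `p < n` divides `m` unless `2m ∣ (p-1)!` (`prim_prime`): if `p ∤ m`, a `p`-cycle fixes a
coset of `G`, so `G` contains a `p`-cycle, and Jordan's theorem makes `G` highly transitive.
In all cases `2m` divides `n!`.

The factor 2 needed to pass from indices in `S_n` to indices in `A_n` is supplied by
`two_mul_card_dvd`: the stabiliser of the relevant structure contains a transposition.

The sum of the reciprocals of the divisors of `n!` is at most the Euler product over the primes
`p ≤ n`, hence at most `7n/16` for `n ≥ 10` (`recSum_divisors_factorial_le`). The four classes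
of subgroups therefore give, by induction on `n`, a bound of the form
`1 + (4/3)/n + (7n/16) · (∑ 1/(n.choose k) + ∑ 1/blockCount) + (primitive part)`
(`recSum_idxFin_le`), in which the primitive part is small because such an index is 360 or
divisible by `3 · 5 · 7` and, for `n ≥ 30`, by a further prime of size at least `n/4` given by Bertrand's
postulate. For `n ≥ 30` the bound is estimated by hand (`recSum_idxFin_lt_large`), for
`11 ≤ n < 30` it is evaluated (`midBound_lt`), and for `5 ≤ n ≤ 10` the constraints of
`altIdx_cases` are iterated and evaluated on all the divisors of `10!/2` (`candSum_five_to_eight`,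
`candSum_nine_ten`). Degrees 3 and 4 are treated directly; `A₄` has exactly the indices
1, 3, 4, 6, 12, as it has no subgroup of index 2.
-/

/-- `𝒥(G)`: the sum of the reciprocals of the indices of the subgroups of a finite
group `G`, each distinct index counted exactly once. -/
noncomputable def HSJ (G : Type*) [Group G] [Finite G] : ℝ :=
  ∑ᶠ m ∈ Set.range (fun H : Subgroup G => H.index), (1 : ℝ) / (m : ℝ)

section HelperLemmas

open Equiv MulAction Finset
open scoped Nat Pointwise

/-! ### Intransitive and imprimitive subgroups -/

/-- The permutations preserving every fibre of `f`: the Young subgroup of the partition of `α`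
into the fibres of `f`. -/
def fiberStab {α ι : Type*} (f : α → ι) : Subgroup (Perm α) where
  carrier := {g | f ∘ g = f}
  mul_mem' {a b} ha hb := by
    ext x
    have h1 := congrFun ha (b x)
    have h2 := congrFun hb x
    simp only [Function.comp_apply] at h1 h2
    simp [h1, h2]
  one_mem' := by ext x; simp
  inv_mem' {a} ha := by
    ext x
    have h1 := congrFun ha (a⁻¹ x)
    simp only [Function.comp_apply] at h1
    rw [show a (a⁻¹ x) = x from a.apply_symm_apply x] at h1
    exact h1.symm

lemma mem_fiberStab {α ι : Type*} {f : α → ι} {g : Perm α} :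
    g ∈ fiberStab f ↔ ∀ x, f (g x) = f x := by
  change f ∘ g = f ↔ _
  rw [funext_iff]; rfl

lemma card_fiberStab {α ι : Type*} [Finite α] [Fintype ι] (f : α → ι) :
    Nat.card (fiberStab f) = ∏ i, (Set.ncard {a | f a = i})! := by
  rw [← DomMulAct.stabilizer_ncard, ← Nat.card_coe_set_eq]
  rfl

/-- A subgroup consisting of even permutations has even index in any overgroup that contains an
odd permutation. -/
lemma two_mul_card_dvd {α : Type*} [Fintype α] [DecidableEq α] {G W : Subgroup (Perm α)}
    (hGA : G ≤ alternatingGroup α) (hGW : G ≤ W) {w : Perm α} (hw : w ∈ W)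
    (hs : Perm.sign w = -1) : 2 * Nat.card G ∣ Nat.card W := by
  let θ : W →* ℤˣ := Perm.sign.comp W.subtype
  have hsurj : Function.Surjective θ := by
    intro u
    rcases Int.units_eq_one_or u with rfl | rfl
    · exact ⟨1, map_one _⟩
    · exact ⟨⟨w, hw⟩, hs⟩
  have h1 : θ.ker.index = 2 := by
    rw [Subgroup.index_ker, MonoidHom.range_eq_top.2 hsurj]
    simp
  have h2 : G.subgroupOf W ≤ θ.ker := by
    intro x hx
    exact hGA hx
  have h3 := Subgroup.index_dvd_of_le h2
  have h4 := (G.subgroupOf W).index_mul_card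
  rw [Nat.card_congr (Subgroup.subgroupOfEquivOfLe hGW).toEquiv] at h4
  rw [← h4, h1.symm]
  exact Nat.mul_dvd_mul_right h3 _

/-- If the even subgroup `G` preserves a set of `k` points whose complement has at least two
points, its index in the alternating group is a multiple of `n.choose k`. -/
lemma choose_dvd_of_invariant {α : Type*} [Fintype α] [DecidableEq α] {G : Subgroup (Perm α)}
    (hGA : G ≤ alternatingGroup α) {m : ℕ} (hm : 2 * m * Nat.card G = (Fintype.card α)!)
    (s : Finset α) (hs : ∀ g ∈ G, ∀ x, g x ∈ s ↔ x ∈ s) (h2 : 1 < sᶜ.card) :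
    (Fintype.card α).choose s.card ∣ m := by
  let f : α → Bool := fun x => decide (x ∈ s)
  obtain ⟨x, hx, y, hy, hxy⟩ := Finset.one_lt_card.1 h2
  rw [Finset.mem_compl] at hx hy
  have hsw : swap x y ∈ fiberStab f := by
    rw [mem_fiberStab]
    intro z
    simp only [f, decide_eq_decide]
    by_cases h1 : z = x
    · subst h1; simp [hx, hy]
    by_cases h2 : z = y
    · subst h2; simp [hx, hy]
    rw [swap_apply_of_ne_of_ne h1 h2]
  have hGW : G ≤ fiberStab f := by
    intro g hg
    rw [mem_fiberStab]
    intro z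
    simp [f, hs g hg]
  obtain ⟨t, ht⟩ := two_mul_card_dvd hGA hGW hsw (Perm.sign_swap hxy)
  have hc : Nat.card (fiberStab f) = s.card ! * (Fintype.card α - s.card)! := by
    rw [card_fiberStab]
    have e1 : {a | f a = true} = (s : Set α) := by ext; simp [f]
    have e2 : {a | f a = false} = ((sᶜ : Finset α) : Set α) := by ext; simp [f]
    rw [Fintype.prod_bool, e1, e2, Set.ncard_coe_finset, Set.ncard_coe_finset,
      Finset.card_compl]
  have h3 := Nat.choose_mul_factorial_mul_factorial (Finset.card_le_univ s)
  rw [mul_assoc, ← hc, ht, ← hm] at h3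
  refine ⟨t, ?_⟩
  have hpos : 0 < Nat.card G := Nat.card_pos
  apply Nat.eq_of_mul_eq_mul_left (show 0 < 2 * Nat.card G by positivity)
  linarith

/-- The permutations that permute the fibres of `f` among themselves, paired with the
permutation of `ι` that they induce. -/
def fiberPerm {α ι : Type*} (f : α → ι) : Subgroup (Perm α × Perm ι) where
  carrier := {p | ∀ x, f (p.1 x) = p.2 (f x)}
  mul_mem' {a b} ha hb x := by simp [ha (b.1 x), hb x]
  one_mem' x := by simp
  inv_mem' {a} ha x := by
    have h1 := ha (a.1⁻¹ x)
    rw [show a.1 (a.1⁻¹ x) = x from a.1.apply_symm_apply x] at h1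
    change f (a.1⁻¹ x) = a.2.symm (f x)
    rw [h1, symm_apply_apply]

lemma card_fiberPerm_dvd {α ι : Type*} [Finite α] [Fintype ι] (f : α → ι) :
    Nat.card (fiberPerm f) ∣ (∏ i, (Set.ncard {a | f a = i})!) * (Fintype.card ι)! := by
  classical
  let θ : fiberPerm f →* Perm ι := (MonoidHom.snd _ _).comp (fiberPerm f).subtype
  have h1 := θ.ker.card_mul_index
  rw [Subgroup.index_ker] at h1
  rw [← h1]
  apply Nat.mul_dvd_mul
  · rw [← card_fiberStab]
    let ψ : θ.ker →* fiberStab f :=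
      { toFun := fun x => ⟨x.1.1.1, by
          rw [mem_fiberStab]
          intro z
          rw [x.1.2 z, show x.1.1.2 = 1 from x.2]; rfl⟩
        map_one' := rfl
        map_mul' := fun _ _ => rfl }
    apply Subgroup.card_dvd_of_injective ψ
    rintro ⟨⟨⟨a, b⟩, h⟩, h'⟩ ⟨⟨⟨c, d⟩, k⟩, k'⟩ e
    have e1 : b = 1 := h'
    have e2 : d = 1 := k'
    have e3 : a = c := congrArg Subtype.val e
    subst e1 e2 e3
    rfl
  · rw [← Fintype.card_perm, ← Nat.card_eq_fintype_card]
    exact Subgroup.card_subgroup_dvd_card _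

/-- A transitive but imprimitive even group preserves a partition of the `n = a * b` points into
`b` blocks of size `a`, so its index in the alternating group is a multiple of the number
`n! / (a! ^ b * b!)` of such partitions. -/
lemma uniformBell_dvd_of_block {α : Type*} [Fintype α] [DecidableEq α] {G : Subgroup (Perm α)}
    (hGA : G ≤ alternatingGroup α) {m : ℕ} (hm : 2 * m * Nat.card G = (Fintype.card α)!)
    [IsPretransitive G α] (hprim : ¬ IsPreprimitive G α) :
    ∃ a b, 2 ≤ a ∧ 2 ≤ b ∧ a * b = Fintype.card α ∧ b.uniformBell a ∣ m := by
  classical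
  have : ∃ B : Set α, IsBlock G B ∧ ¬ IsTrivialBlock B := by
    by_contra! h
    exact hprim ⟨fun {B} hB => h B hB⟩
  obtain ⟨B, hB, hBt⟩ := this
  have hBn : B.Nontrivial := by
    rw [← Set.not_subsingleton_iff]
    exact fun h => hBt (Or.inl h)
  have hBu : B ≠ Set.univ := fun h => hBt (Or.inr h)
  obtain ⟨x₀, hx₀, y₀, hy₀, hxy₀⟩ := hBn
  let ι := orbit G B
  have hex : ∀ x : α, ∃ S : ι, x ∈ S.1 := by
    intro x
    obtain ⟨g, hg⟩ := exists_smul_eq G x₀ x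
    exact ⟨⟨g • B, mem_orbit _ _⟩, hg ▸ Set.smul_mem_smul_set hx₀⟩
  have huniq : ∀ (S T : ι) (x : α), x ∈ S.1 → x ∈ T.1 → S = T := by
    rintro ⟨_, g, rfl⟩ ⟨_, h, rfl⟩ x hS hT
    rcases isBlock_iff_smul_eq_smul_or_disjoint.1 hB g h with h1 | h1
    · exact Subtype.ext h1
    · exact absurd hT (Set.disjoint_left.1 h1 hS)
  choose f hf using hex
  have hfib : ∀ S : ι, {a | f a = S} = S.1 := by
    intro S
    ext x
    constructor
    · rintro rfl; exact hf x
    · intro hx; exact huniq _ _ x (hf x) hx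
  have hcard : ∀ S : ι, Set.ncard {a | f a = S} = B.ncard := by
    intro S
    rw [hfib]
    obtain ⟨_, g, rfl⟩ := S
    exact Set.ncard_smul_set g B
  have : Fintype ι := Fintype.ofFinite ι
  set W := (fiberPerm f).map (MonoidHom.fst _ _) with hW
  have hGW : G ≤ W := by
    intro g hg
    refine ⟨(g, MulAction.toPerm (⟨g, hg⟩ : G)), ?_, rfl⟩
    intro x
    refine huniq _ _ (g x) (hf _) ?_
    exact Set.smul_mem_smul_set (a := (⟨g, hg⟩ : G)) (hf x)
  have hsw : swap x₀ y₀ ∈ W := by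
    refine ⟨(swap x₀ y₀, 1), ?_, rfl⟩
    intro z
    have hxy : f x₀ = f y₀ := by
      let S : ι := ⟨B, mem_orbit_self B⟩
      rw [huniq (f x₀) S x₀ (hf _) hx₀, huniq (f y₀) S y₀ (hf _) hy₀]
    change f (swap x₀ y₀ z) = f z
    by_cases h1 : z = x₀
    · subst h1; simp [hxy]
    by_cases h2 : z = y₀
    · subst h2; simp [hxy]
    rw [swap_apply_of_ne_of_ne h1 h2]
  have h1 := two_mul_card_dvd hGA hGW hsw (Perm.sign_swap hxy₀)
  have h2 : Nat.card W ∣ Nat.card (fiberPerm f) := Subgroup.card_map_dvd _ _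
  have h3 := (h1.trans h2).trans (card_fiberPerm_dvd f)
  simp only [hcard, Finset.prod_const, Finset.card_univ] at h3
  set a := B.ncard
  set b := Fintype.card ι
  have hab : a * b = Fintype.card α := by
    have := hB.ncard_block_mul_ncard_orbit_eq ⟨x₀, hx₀⟩
    rw [Nat.card_eq_fintype_card] at this
    rw [← this, ← Nat.card_coe_set_eq (orbit G B), Nat.card_eq_fintype_card]
  have ha : 2 ≤ a := (Set.one_lt_ncard).2 ⟨x₀, hx₀, y₀, hy₀, hxy₀⟩
  refine ⟨a, b, ha, ?_, hab, ?_⟩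
  · by_contra hb
    have hpos : 0 < Fintype.card α := Fintype.card_pos_iff.2 ⟨x₀⟩
    have hb1 : b = 1 := by
      rcases Nat.eq_zero_or_pos b with h | h
      · rw [h] at hab; omega
      · omega
    apply hBu
    rw [Set.eq_univ_iff_ncard, Nat.card_eq_fintype_card, ← hab, hb1, mul_one]
  · obtain ⟨t, ht⟩ := h3
    have h4 := Nat.uniformBell_mul_eq b (show a ≠ 0 by omega)
    rw [mul_comm b a, hab, ← hm, mul_assoc, ht] at h4
    refine ⟨t, ?_⟩
    have hpos : 0 < Nat.card G := Nat.card_pos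
    apply Nat.eq_of_mul_eq_mul_left (show 0 < 2 * Nat.card G by positivity)
    linarith

/-! ### Primitive subgroups -/

section Primitive

variable {α : Type*} [Fintype α] [DecidableEq α]

lemma index_subgroupOf_alternating [Nontrivial α] {G : Subgroup (Perm α)}
    (hGA : G ≤ alternatingGroup α) {m : ℕ} (hm : 2 * m * Nat.card G = (Fintype.card α)!) :
    (G.subgroupOf (alternatingGroup α)).index = m := by
  have h1 := (G.subgroupOf (alternatingGroup α)).index_mul_card
  rw [Nat.card_congr (Subgroup.subgroupOfEquivOfLe hGA).toEquiv] at h1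
  have hpos : 0 < Nat.card G := Nat.card_pos
  have h4 := two_mul_nat_card_alternatingGroup (α := α)
  rw [← h1, Nat.card_perm, Nat.card_eq_fintype_card (α := α), ← hm] at h4
  apply Nat.eq_of_mul_eq_mul_right (show 0 < 2 * Nat.card G by positivity)
  linarith

/-- If the supports of two permutations meet in a single point, their commutator is a 3-cycle. -/
lemma isThreeCycle_of_support_inter {g h : Perm α} {c : α} (hg : g c ≠ c) (hh : h c ≠ c)
    (hgh : ∀ x, g x ≠ x → h x ≠ x → x = c) : (g * h * g⁻¹ * h⁻¹).IsThreeCycle := by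
  have gi : ∀ x y, g x = g y → x = y := fun x y => g.injective.eq_iff.1
  have hi : ∀ x y, h x = h y → x = y := fun x y => h.injective.eq_iff.1
  have key : g * h = swap c (h c) * swap c (g c) * (h * g) := by
    ext x
    simp only [Perm.mul_apply]
    have s1 := swap_apply_left c (h c)
    have s2 := swap_apply_right c (h c)
    have s3 := fun y => swap_apply_of_ne_of_ne (a := c) (b := h c) (x := y)
    have t1 := swap_apply_left c (g c)
    have t2 := swap_apply_right c (g c)
    have t3 := fun y => swap_apply_of_ne_of_ne (a := c) (b := g c) (x := y)
    generalize swap c (h c) = s at *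
    generalize swap c (g c) = t at *
    have ha : h (g c) = g c := by
      by_contra hc
      have := hgh (g c) (fun e => hg (gi _ _ e)) hc
      exact hg this
    have hb : g (h c) = h c := by
      by_contra hc
      have := hgh (h c) hc (fun e => hh (hi _ _ e))
      exact hh this
    by_cases hxc : x = c
    · subst hxc
      rw [ha, hb, t2, s1]
    by_cases hgx : g x = x
    · rw [hgx]
      by_cases hhx : h x = c
      · rw [hhx, t1, s3 _ hg (by grind)]
      · have h1 : h x ≠ g c := fun e => by grind
        have h2 : h x ≠ h c := fun e => hxc (hi _ _ e)
        rw [t3 _ hhx h1, s3 _ hhx h2]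
        by_contra h3
        have := hgh (h x) h3 (fun e => by grind)
        exact hhx this
    · have hhx : h x = x := by
        by_contra h3
        exact hxc (hgh x hgx h3)
      rw [hhx]
      by_cases hgc : g x = c
      · rw [hgc, t3 _ hh (by grind), s2]
      · have hh3 : h (g x) = g x := by
          by_contra h3
          exact hgc (hgh (g x) (fun e => hgx (gi _ _ e)) h3)
        rw [hh3, t3 _ hgc (fun e => hxc (gi _ _ e)), s3 _ hgc (fun e => by grind)]
  have : g * h * g⁻¹ * h⁻¹ = swap c (h c) * swap c (g c) := by
    rw [key]; group
  rw [this]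
  apply Perm.isThreeCycle_swap_mul_swap_same hh.symm hg.symm
  intro e
  have := hgh (h c)
  grind

/-- A primitive group not containing the alternating group has a set of `⌈n/2⌉` points
supporting no non-trivial element of the group: a maximal set with this property cannot be
smaller, as two elements supported on its complement and on a one-point enlargement of it would
have a 3-cycle as commutator. -/
lemma exists_support_trivial {G : Subgroup (Perm α)} (hG : IsPreprimitive G α)
    (hA : ¬ alternatingGroup α ≤ G) :
    ∃ Γ : Finset α, Γ.card = (Fintype.card α + 1) / 2 ∧
      ∀ g ∈ G, (∀ x ∉ Γ, g x = x) → g = 1 := by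
  classical
  let P : Finset α → Prop := fun Γ => ∀ g ∈ G, (∀ x ∉ Γ, g x = x) → g = 1
  have hne : (Finset.univ.filter P).Nonempty :=
    ⟨∅, by
      simp only [Finset.mem_filter, Finset.mem_univ, true_and]
      intro g _ hx
      ext x
      simp [hx]⟩
  obtain ⟨Γ, hΓ, hmax⟩ := Finset.exists_max_image _ Finset.card hne
  simp only [Finset.mem_filter, Finset.mem_univ, true_and] at hΓ hmax
  have hk : (Fintype.card α + 1) / 2 ≤ Γ.card := by
    by_contra! hlt
    have h1 : ¬ P Γᶜ := by
      intro h
      have := hmax _ h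
      rw [Finset.card_compl] at this
      omega
    simp only [P, not_forall] at h1
    obtain ⟨g, hg, hgx, hg1⟩ := h1
    obtain ⟨c, hc⟩ : ∃ c, g c ≠ c := by
      by_contra! h
      exact hg1 (Equiv.ext h)
    have hcΓ : c ∉ Γ := fun h => hc (hgx c (by simpa using h))
    have h2 : ¬ P (insert c Γ) := by
      intro h
      have := hmax _ h
      rw [Finset.card_insert_of_notMem hcΓ] at this
      omega
    simp only [P, not_forall] at h2
    obtain ⟨h, hh, hhx, hh1⟩ := h2
    have hhc : h c ≠ c := by
      intro e
      apply hh1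
      apply hΓ h hh
      intro x hx
      by_cases hxc : x = c
      · rw [hxc, e]
      · exact hhx x (by simp [hxc, hx])
    have h3 := isThreeCycle_of_support_inter hc hhc (by
      intro x hgx' hhx'
      have h4 : x ∉ Γ := fun h => hgx' (hgx x (by simpa using h))
      by_contra hxc
      exact hhx' (hhx x (by simp [hxc, h4])))
    exact hA (Perm.alternatingGroup_le_of_isPreprimitive_of_isThreeCycle_mem hG h3
      (G.mul_mem (G.mul_mem (G.mul_mem hg hh) (G.inv_mem hg)) (G.inv_mem hh)))
  obtain ⟨Δ, hΔ, hc⟩ := Finset.exists_subset_card_eq hk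
  exact ⟨Δ, hc, fun g hg hx => hΓ g hg fun x hxΓ => hx x fun h => hxΓ (hΔ h)⟩

/-- The even permutations supported on `Γ`. -/
def evenOn (Γ : Finset α) : Subgroup (Perm α) where
  carrier := {g | Perm.sign g = 1 ∧ ∀ x ∉ Γ, g x = x}
  mul_mem' {a b} ha hb := ⟨by simp [ha.1, hb.1], fun x hx => by simp [ha.2 x hx, hb.2 x hx]⟩
  one_mem' := by simp
  inv_mem' {a} ha := ⟨by simp [ha.1], fun x hx => by
    rw [Perm.inv_eq_iff_eq, ha.2 x hx]⟩

lemma mem_evenOn {Γ : Finset α} {g : Perm α} :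
    g ∈ evenOn Γ ↔ Perm.sign g = 1 ∧ ∀ x ∉ Γ, g x = x := Iff.rfl

lemma two_mul_card_evenOn {Γ : Finset α} (h2 : 2 ≤ Γ.card) :
    2 * Nat.card (evenOn Γ) = Γ.card ! := by
  have e : evenOn Γ = (alternatingGroup Γ).map (Perm.ofSubtype : Perm Γ →* Perm α) := by
    rw [alternatingGroup.map_ofSubtype]
    ext g
    rw [Subgroup.mem_inf, Perm.mem_range_ofSubtype_iff, mem_evenOn, Perm.mem_alternatingGroup,
      and_comm]
    refine and_congr_left fun _ => ?_
    constructor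
    · intro h x hx
      by_contra hx'
      exact (Perm.mem_support.1 hx) (h x hx')
    · intro h x hx
      by_contra hx'
      exact hx (h (Perm.mem_support.2 hx'))
  have : Nontrivial Γ := by
    rw [← Fintype.one_lt_card_iff_nontrivial, Fintype.card_coe]; omega
  rw [e, Subgroup.card_map_of_injective Perm.ofSubtype_injective,
    two_mul_nat_card_alternatingGroup, Nat.card_perm, Nat.card_eq_fintype_card, Fintype.card_coe]

/-- `|K| ≤ m |G ∩ K|` for a subgroup `G` of index `m` and a subgroup `K` of the alternating
group; here `K` consists of the even permutations supported on `Γ`. -/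
lemma factorial_le_of_card_inf {G : Subgroup (Perm α)} (hGA : G ≤ alternatingGroup α) {m : ℕ}
    (hm : 2 * m * Nat.card G = (Fintype.card α)!) (Γ : Finset α) (h2 : 2 ≤ Γ.card) :
    Γ.card ! ≤ 2 * m * Nat.card (G ⊓ evenOn Γ : Subgroup (Perm α)) := by
  have : Nontrivial α := by
    rw [← Fintype.one_lt_card_iff_nontrivial]
    exact lt_of_lt_of_le h2 (Finset.card_le_univ Γ)
  have h3 : G.relIndex (alternatingGroup α) = m := index_subgroupOf_alternating hGA hm
  have hm0 : m ≠ 0 := by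
    rintro rfl
    have := Nat.factorial_pos (Fintype.card α)
    simp at hm; omega
  have h5 : G.relIndex (evenOn Γ) ≤ m := by
    rw [← h3]
    apply Subgroup.relIndex_le_of_le_right
    · intro g hg; exact hg.1
    · rwa [h3]
  have h6 : G.relIndex (evenOn Γ) * Nat.card (G ⊓ evenOn Γ : Subgroup (Perm α)) =
      Nat.card (evenOn Γ) := by
    rw [← Subgroup.inf_relIndex_right]
    have := ((G ⊓ evenOn Γ).subgroupOf (evenOn Γ)).index_mul_card
    rwa [Nat.card_congr (Subgroup.subgroupOfEquivOfLe inf_le_right).toEquiv] at this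
  rw [← two_mul_card_evenOn h2, ← h6, mul_assoc]
  gcongr

/-- Bochert's bound: `G` meets the group of even permutations supported on `⌈n/2⌉` suitable points
trivially, so its index is at least the order `⌈n/2⌉! / 2` of that group. -/
lemma bochert {G : Subgroup (Perm α)} (hGA : G ≤ alternatingGroup α) {m : ℕ}
    (hm : 2 * m * Nat.card G = (Fintype.card α)!) (hG : IsPreprimitive G α)
    (hA : ¬ alternatingGroup α ≤ G) (h3 : 3 ≤ Fintype.card α) :
    ((Fintype.card α + 1) / 2)! ≤ 2 * m := by
  obtain ⟨Γ, hΓ, h⟩ := exists_support_trivial hG hA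
  have h1 := factorial_le_of_card_inf hGA hm Γ (by omega)
  have h2 : G ⊓ evenOn Γ = ⊥ := by
    rw [eq_bot_iff]
    rintro g ⟨hg, hg'⟩
    exact h g hg hg'.2
  rw [h2, hΓ, Subgroup.card_bot] at h1
  omega

/-- In degree 9, the trivially intersecting set `Γ` of 5 points is enlarged by one point `x`.
An element of `G` supported on the resulting 6 points is determined by the image of `x`, and not
all 6 images occur, since an involution moving all 6 points is odd. -/
lemma prim_nine {G : Subgroup (Perm α)} (hGA : G ≤ alternatingGroup α) {m : ℕ}
    (hm : 2 * m * Nat.card G = (Fintype.card α)!) (hG : IsPreprimitive G α)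
    (hA : ¬ alternatingGroup α ≤ G) (h9 : Fintype.card α = 9) : 72 ≤ m := by
  obtain ⟨Γ, hΓ, h⟩ := exists_support_trivial hG hA
  rw [h9] at hΓ
  obtain ⟨x, hx⟩ : ∃ x, x ∉ Γ := by
    by_contra! hc
    have := Finset.card_le_card (fun y _ => hc y : (Finset.univ : Finset α) ⊆ Γ)
    rw [Finset.card_univ] at this
    omega
  have hΓ' : (insert x Γ).card = 6 := by rw [Finset.card_insert_of_notMem hx, hΓ]
  set L := G ⊓ evenOn (insert x Γ) with hL
  have h1 := factorial_le_of_card_inf hGA hm (insert x Γ) (by omega)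
  have hfix : ∀ g ∈ L, g x = x → g = 1 := by
    intro g hg hgx
    apply h g hg.1
    intro y hy
    by_cases hyx : y = x
    · rw [hyx, hgx]
    · exact hg.2.2 y (by simp [hyx, hy])
  have hinj : ∀ g ∈ L, ∀ k ∈ L, g x = k x → g = k := by
    intro g hg k hk e
    have := hfix (k⁻¹ * g) (L.mul_mem (L.inv_mem hk) hg)
      (by rw [Perm.mul_apply, e]; exact k.symm_apply_apply x)
    rwa [inv_mul_eq_one, eq_comm] at this
  have hmem : ∀ g ∈ L, g x ∈ insert x Γ := by
    intro g hg
    by_contra hc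
    have := g.injective (hg.2.2 _ hc)
    rw [this] at hc
    simp at hc
  let F : L → (insert x Γ : Finset α) := fun g => ⟨g.1 x, hmem g.1 g.2⟩
  have hF : Function.Injective F := by
    intro g k e
    exact Subtype.ext (hinj _ g.2 _ k.2 (congrArg Subtype.val e))
  have hle : Nat.card L ≤ 6 := by
    have := Nat.card_le_card_of_injective F hF
    rwa [Nat.card_eq_fintype_card (α := (insert x Γ : Finset α)), Fintype.card_coe, hΓ'] at this
  have hne : Nat.card L ≠ 6 := by
    intro h6
    obtain ⟨⟨t, htL⟩, ht⟩ := exists_prime_orderOf_dvd_card' (G := L) 2 (by rw [h6]; norm_num)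
    rw [Subgroup.orderOf_mk] at ht
    have hbij : Function.Bijective F := by
      rw [Nat.bijective_iff_injective_and_card]
      refine ⟨hF, ?_⟩
      rw [h6, Nat.card_eq_fintype_card, Fintype.card_coe, hΓ']
    have hsupp : t.support = insert x Γ := by
      ext y
      rw [Perm.mem_support]
      constructor
      · intro hy
        by_contra hc
        exact hy (htL.2.2 y hc)
      · intro hy hty
        -- a point of the regular orbit fixed by `t` would force `t = 1`
        obtain ⟨⟨g, hg⟩, e⟩ := hbij.2 ⟨y, hy⟩
        have e' : g x = y := congrArg Subtype.val e
        have := hinj (t * g) (L.mul_mem htL hg) g hg (by rw [Perm.mul_apply, e', hty])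
        rw [mul_eq_right] at this
        rw [this, orderOf_one] at ht
        omega
    have hs := htL.2.1
    have : Fact (Nat.Prime 2) := ⟨Nat.prime_two⟩
    obtain ⟨n, hn⟩ := Perm.cycleType_prime_order (σ := t) (by rw [ht]; exact Nat.prime_two)
    have hsum := Perm.sum_cycleType t
    rw [Perm.sign_of_cycleType, hn] at hs
    rw [hn, hsupp, hΓ', ht] at hsum
    simp only [Multiset.sum_replicate, smul_eq_mul] at hsum
    have : n = 2 := by omega
    subst this
    rw [ht] at hs
    revert hs
    decide
  have h5 : Nat.card L ≤ 5 := by omega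
  rw [hΓ', ← hL] at h1
  have : 2 * m * Nat.card L ≤ 2 * m * 5 := by gcongr
  have e6 : (6 : ℕ)! = 720 := rfl
  omega

/-- If the odd prime `p < n` does not divide the index `m`, then the primitive group `G` contains a
`p`-cycle, so by Jordan's theorem it is `(n - p + 1)`-transitive, and its order is a multiple of
`n! / (p - 1)!`. -/
lemma prim_prime {G : Subgroup (Perm α)} (hGA : G ≤ alternatingGroup α) {m : ℕ}
    (hm : 2 * m * Nat.card G = (Fintype.card α)!) (hG : IsPreprimitive G α)
    {p : ℕ} (hp : p.Prime) (hp2 : p ≠ 2) (hpn : p < Fintype.card α) :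
    p ∣ m ∨ 2 * m ∣ (p - 1)! := by
  classical
  rw [or_iff_not_imp_left]
  intro hpm
  have : Nontrivial α := by
    rw [← Fintype.one_lt_card_iff_nontrivial]
    exact hp.one_lt.trans hpn
  have : Fact p.Prime := ⟨hp⟩
  have hidx := index_subgroupOf_alternating hGA hm
  obtain ⟨c, hc⟩ := (Perm.exists_with_cycleType_iff α (m := {p})).2
    ⟨by simpa using hpn.le, by simpa using hp.two_le⟩
  have hcs : c ∈ alternatingGroup α := by
    rw [Perm.mem_alternatingGroup, Perm.sign_of_cycleType, hc]
    have := hp.eq_two_or_odd'.resolve_left hp2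
    simpa using this.add_one.neg_one_pow
  have hco : orderOf c = p := by
    rw [← Perm.lcm_cycleType, hc]; simp
  let c' : alternatingGroup α := ⟨c, hcs⟩
  have hco' : orderOf c' = p := by rw [Subgroup.orderOf_mk, hco]
  have hPG : IsPGroup p (Subgroup.zpowers c') :=
    IsPGroup.of_card (n := 1) (by rw [Nat.card_zpowers, hco', pow_one])
  obtain ⟨q, hq⟩ := hPG.nonempty_fixed_point_of_prime_not_dvd_card
    (alternatingGroup α ⧸ G.subgroupOf (alternatingGroup α)) (by rwa [← Subgroup.index, hidx])
  obtain ⟨a, rfl⟩ := QuotientGroup.mk_surjective q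
  have h1 : ((c' * a : alternatingGroup α) :
      alternatingGroup α ⧸ G.subgroupOf (alternatingGroup α)) = a :=
    hq ⟨c', Subgroup.mem_zpowers c'⟩
  rw [eq_comm, QuotientGroup.eq, Subgroup.mem_subgroupOf] at h1
  set g : Perm α := ((a⁻¹ * (c' * a) : alternatingGroup α) : Perm α) with hg
  have hgt : g.cycleType = {p} := by
    have : g = (a : Perm α)⁻¹ * c * ((a : Perm α)⁻¹)⁻¹ := by
      rw [hg]; simp [c', mul_assoc]
    rw [this, Perm.cycleType_conj, hc]
  have hgc : g.IsCycle := by rw [← Perm.card_cycleType_eq_one, hgt]; simp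
  have hgs : g.support.card = p := by rw [← Perm.sum_cycleType, hgt]; simp
  obtain ⟨n, hn⟩ : ∃ n, Fintype.card α = p + n + 1 := ⟨Fintype.card α - p - 1, by omega⟩
  have hn' : Nat.card α = p + n + 1 := by rw [Nat.card_eq_fintype_card, hn]
  have hsc : Set.ncard ((g.support : Set α)ᶜ) = n + 1 := by
    apply Nat.add_left_cancel
    rw [Set.ncard_add_ncard_compl, Set.ncard_coe_finset, hgs, hn', add_assoc]
  have hmp : IsMultiplyPreprimitive G α (n + 2) := by
    apply hG.isMultiplyPreprimitive hsc
    · rw [hn']; have := hp.two_le; omega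
    have := Perm.isPretransitive_of_isCycle_mem hgc h1
    apply IsPreprimitive.of_prime_card
    convert! hp
    rw [Nat.card_eq_fintype_card, Fintype.card_subtype, ← hgs]
    apply congr_arg
    ext x
    simp [SubMulAction.mem_ofFixingSubgroup_iff]
  have hmt : IsMultiplyPretransitive G α (n + 2) := hmp.isMultiplyPretransitive
  obtain ⟨s, hs⟩ : ∃ s : Set α, s.ncard = n + 2 := by
    obtain ⟨s, -, hs⟩ := Finset.exists_subset_card_eq (s := (Finset.univ : Finset α)) (n := n + 2)
      (by rw [Finset.card_univ, hn]; have := hp.two_le; omega)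
    exact ⟨s, by rw [Set.ncard_coe_finset, hs]⟩
  have h2 := hmt.index_of_fixingSubgroup_mul hs
  have h3 := (fixingSubgroup G s).index_mul_card
  have e : Nat.card α - (n + 2) = p - 1 := by omega
  rw [e, Nat.card_eq_fintype_card (α := α), ← hm, ← h3] at h2
  have hpos : 0 < (fixingSubgroup G s).index :=
    Nat.pos_of_ne_zero (Subgroup.FiniteIndex.index_ne_zero)
  refine ⟨Nat.card (fixingSubgroup G s), ?_⟩
  apply Nat.eq_of_mul_eq_mul_left hpos
  rw [h2]; ring

/-- The simple group `A_n`, `n ≥ 5`, acts faithfully on the cosets of a proper subgroup, so the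
index of the latter is at least 5. -/
lemma five_le_index {G : Subgroup (Perm α)} (hGA : G ≤ alternatingGroup α) {m : ℕ}
    (hm : 2 * m * Nat.card G = (Fintype.card α)!) (h5 : 5 ≤ Fintype.card α)
    (hA : ¬ alternatingGroup α ≤ G) : 5 ≤ m := by
  have : Nontrivial α := by
    rw [← Fintype.one_lt_card_iff_nontrivial]; omega
  have hidx := index_subgroupOf_alternating hGA hm
  set H := G.subgroupOf (alternatingGroup α) with hH
  have hs : IsSimpleGroup (alternatingGroup α) :=
    alternatingGroup.isSimpleGroup (by rwa [Nat.card_eq_fintype_card])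
  have hker : (MulAction.toPermHom (alternatingGroup α) (alternatingGroup α ⧸ H)).ker = ⊥ := by
    rw [← Subgroup.normalCore_eq_ker]
    rcases hs.eq_bot_or_eq_top_of_normal H.normalCore inferInstance with h | h
    · exact h
    · exfalso
      apply hA
      have : H = ⊤ := by
        rw [eq_top_iff, ← h]; exact H.normalCore_le
      rwa [hH, Subgroup.subgroupOf_eq_top] at this
  have h1 := Subgroup.card_dvd_of_injective _ ((MonoidHom.ker_eq_bot_iff _).1 hker)
  rw [Nat.card_perm, ← Subgroup.index, hidx] at h1
  have h2 := Nat.le_of_dvd (Nat.factorial_pos _) h1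
  have h3 := two_mul_nat_card_alternatingGroup (α := α)
  rw [Nat.card_perm, Nat.card_eq_fintype_card (α := α)] at h3
  have h4 := Nat.factorial_le h5
  by_contra! hm5
  have h6 := Nat.factorial_le (show m ≤ 4 by omega)
  have e5 : (5 : ℕ)! = 120 := rfl
  have e4 : (4 : ℕ)! = 24 := rfl
  omega

end Primitive

/-! ### The possible indices -/

section Indices

variable {α : Type*} [Fintype α] [DecidableEq α]

/-- The numbers `m` such that the symmetric group of degree `n` has a subgroup of order
`n! / (2 * m)` consisting of even permutations. For `n ≥ 2` these are the indices of the subgroups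
of the alternating group. -/
def AltIdx (n : ℕ) : Set ℕ :=
  {m | ∃ G : Subgroup (Perm (Fin n)), G ≤ alternatingGroup (Fin n) ∧ 2 * m * Nat.card G = n !}

lemma mem_altIdx {G : Subgroup (Perm α)} (hGA : G ≤ alternatingGroup α) {m : ℕ}
    (hm : 2 * m * Nat.card G = (Fintype.card α)!) : m ∈ AltIdx (Fintype.card α) := by
  let e := Fintype.equivFin α
  refine ⟨G.map e.permCongrHom.toMonoidHom, ?_, ?_⟩
  · rintro _ ⟨g, hg, rfl⟩
    have := hGA hg
    rw [Perm.mem_alternatingGroup] at this ⊢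
    rw [← this]
    exact Perm.sign_permCongr e g
  · rw [Subgroup.card_map_of_injective e.permCongrHom.injective, hm]

lemma exists_index {G : Subgroup (Perm α)} (hGA : G ≤ alternatingGroup α) [Nontrivial α] :
    ∃ m, 2 * m * Nat.card G = (Fintype.card α)! := by
  obtain ⟨m, hm⟩ := Subgroup.card_dvd_of_le hGA
  refine ⟨m, ?_⟩
  rw [← Nat.card_eq_fintype_card (α := α), ← Nat.card_perm, ← two_mul_nat_card_alternatingGroup, hm]
  ring

/-- When `G` fixes `x`, it is a subgroup of the alternating group on the remaining `n` points, whose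
index in the alternating group of degree `n + 1` is `n + 1`. -/
lemma fixed_point {n : ℕ} (hn : 2 ≤ n) {G : Subgroup (Perm (Fin (n + 1)))}
    (hGA : G ≤ alternatingGroup (Fin (n + 1))) {m : ℕ} (hm : 2 * m * Nat.card G = (n + 1)!)
    (x : Fin (n + 1)) (hx : ∀ g ∈ G, g x = x) : ∃ m' ∈ AltIdx n, m = (n + 1) * m' := by
  let β := {y : Fin (n + 1) // y ≠ x}
  have hcard : Fintype.card β = n := by
    rw [Fintype.card_subtype_compl]; simp
  let θ : Perm β →* Perm (Fin (n + 1)) := Perm.ofSubtype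
  have hθ : Function.Injective θ := Perm.ofSubtype_injective
  have hG : (G.comap θ).map θ = G := by
    rw [Subgroup.map_comap_eq, inf_eq_right]
    intro g hg
    rw [Perm.mem_range_ofSubtype_iff]
    rintro y hy rfl
    exact (Perm.mem_support.1 hy) (hx g hg)
  have hc : Nat.card (G.comap θ) = Nat.card G := by
    conv_rhs => rw [← hG]
    rw [Subgroup.card_map_of_injective hθ]
  have hA : G.comap θ ≤ alternatingGroup β := by
    intro g hg
    have := hGA hg
    rw [Perm.mem_alternatingGroup] at this ⊢
    rw [← this]
    exact (Perm.sign_ofSubtype g).symm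
  have : Nontrivial β := by
    rw [← Fintype.one_lt_card_iff_nontrivial]; omega
  obtain ⟨m', hm'⟩ := exists_index hA
  have h1 := mem_altIdx hA hm'
  rw [hcard] at h1
  refine ⟨m', h1, ?_⟩
  rw [hcard, hc] at hm'
  rw [Nat.factorial_succ, ← hm'] at hm
  have hpos : 0 < Nat.card G := Nat.card_pos
  apply Nat.eq_of_mul_eq_mul_right (show 0 < 2 * Nat.card G by positivity)
  linarith

/-- Arithmetical constraints on the index `m` in the alternating group of degree `n` of a proper
primitive subgroup: `n` divides the order of a transitive group, and the other fields record
`bochert`, `prim_prime`, `prim_nine` and `five_le_index`. -/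
structure PrimIdx (n m : ℕ) : Prop where
  dvd : 2 * n * m ∣ (n)!
  bochert : ((n + 1) / 2)! ≤ 2 * m
  prime : ∀ p, p.Prime → p ≠ 2 → p < n → p ∣ m ∨ 2 * m ∣ (p - 1)!
  nine : n = 9 → 72 ≤ m
  five : 5 ≤ m

/-- The possible indices of subgroups of the alternating group, according to whether the subgroup
has a fixed point, is intransitive without fixed points, imprimitive or primitive. -/
lemma altIdx_cases {n m : ℕ} (hn : 5 ≤ n) (h : m ∈ AltIdx n) :
    m = 1 ∨ (∃ m' ∈ AltIdx (n - 1), m = n * m') ∨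
      (∃ k, 2 ≤ k ∧ k ≤ n / 2 ∧ n.choose k ∣ m) ∨
      (∃ a b, 2 ≤ a ∧ 2 ≤ b ∧ a * b = n ∧ b.uniformBell a ∣ m) ∨ PrimIdx n m := by
  classical
  obtain ⟨G, hGA, hm⟩ := h
  by_cases hA : alternatingGroup (Fin n) ≤ G
  · left
    obtain rfl := le_antisymm hGA hA
    have : Nontrivial (Fin n) := Fin.nontrivial_iff_two_le.2 (by omega)
    have h1 := two_mul_nat_card_alternatingGroup (α := Fin n)
    rw [Nat.card_perm, Nat.card_eq_fintype_card (α := Fin n), Fintype.card_fin, ← hm] at h1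
    have hpos : 0 < Nat.card (alternatingGroup (Fin n)) := Nat.card_pos
    apply Nat.eq_of_mul_eq_mul_right
      (show 0 < 2 * Nat.card (alternatingGroup (Fin n)) by positivity)
    linarith
  have hm' : 2 * m * Nat.card G = (Fintype.card (Fin n))! := by rwa [Fintype.card_fin]
  right
  by_cases hfix : ∃ x, ∀ g ∈ G, g x = x
  · left
    obtain ⟨x, hx⟩ := hfix
    obtain ⟨n, rfl⟩ : ∃ k, n = k + 1 := ⟨n - 1, by omega⟩
    exact fixed_point (by omega) hGA hm x hx
  right
  by_cases htr : IsPretransitive G (Fin n)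
  · right
    by_cases hpr : IsPreprimitive G (Fin n)
    · right
      refine ⟨?_, ?_, ?_, ?_, ?_⟩
      · obtain ⟨t, ht⟩ : n ∣ Nat.card G := by
          let x : Fin n := ⟨0, by omega⟩
          have := (stabilizer G x).index_dvd_card
          rwa [index_stabilizer_of_transitive, Nat.card_eq_fintype_card (α := Fin n),
            Fintype.card_fin] at this
        refine ⟨t, ?_⟩
        rw [← hm, ht]; ring
      · have := bochert hGA hm' hpr hA (by rw [Fintype.card_fin]; omega)
        rwa [Fintype.card_fin] at this
      · intro p hp hp2 hpn
        exact prim_prime hGA hm' hpr hp hp2 (by rwa [Fintype.card_fin])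
      · intro h9
        exact prim_nine hGA hm' hpr hA (by rwa [Fintype.card_fin])
      · exact five_le_index hGA hm' (by rwa [Fintype.card_fin]) hA
    · left
      have := uniformBell_dvd_of_block hGA hm' hpr
      rwa [Fintype.card_fin] at this
  · left
    have key : ∀ s : Finset (Fin n), (∀ g ∈ G, ∀ x, g x ∈ s ↔ x ∈ s) → s.Nonempty →
        s.card ≤ n / 2 → ∃ k, 2 ≤ k ∧ k ≤ n / 2 ∧ n.choose k ∣ m := by
      intro s hs hne hle
      have h2 : 2 ≤ s.card := by
        by_contra hlt
        have h1 : s.card = 1 := by have := hne.card_pos; omega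
        obtain ⟨x, rfl⟩ := Finset.card_eq_one.1 h1
        exact hfix ⟨x, fun g hg => by simpa using (hs g hg x).2 (by simp)⟩
      refine ⟨s.card, h2, hle, ?_⟩
      have := choose_dvd_of_invariant hGA hm' s hs
        (by rw [Finset.card_compl, Fintype.card_fin]; omega)
      rwa [Fintype.card_fin] at this
    have : ∃ x y : Fin n, y ∉ orbit G x := by
      by_contra! hc
      exact htr ⟨fun x y => hc x y⟩
    obtain ⟨x, y, hy⟩ := this
    let s : Finset (Fin n) := Finset.univ.filter (· ∈ orbit G x)
    have hs : ∀ g ∈ G, ∀ z, g z ∈ s ↔ z ∈ s := by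
      intro g hg z
      simp only [s, Finset.mem_filter, Finset.mem_univ, true_and]
      rw [mem_orbit_symm, mem_orbit_symm (a₁ := z), ← orbit_smul (⟨g, hg⟩ : G) z]
      rfl
    -- one of the orbit of `x` and its complement has at most `n / 2` points
    by_cases hle : s.card ≤ n / 2
    · exact key s hs ⟨x, by simp [s]⟩ hle
    · refine key sᶜ ?_ ⟨y, by simp [s, hy]⟩ (by rw [Finset.card_compl, Fintype.card_fin]; omega)
      intro g hg z
      rw [Finset.mem_compl, Finset.mem_compl, hs g hg z]

end Indices

/-! ### Degrees 5 to 10: evaluation of the candidate indices -/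

/-- The number `(a * b)! / (a! ^ b * b!)` of partitions of `a * b` points into `b` blocks of
size `a`, in a form suited to evaluation. -/
def blockCount (a b : ℕ) : ℕ := (a * b)! / ((a !) ^ b * b !)

lemma uniformBell_eq_blockCount {a : ℕ} (b : ℕ) (ha : 2 ≤ a) :
    b.uniformBell a = blockCount a b := by
  rw [blockCount, Nat.uniformBell_eq_div b (by omega), mul_comm a b]

/-- A decidable predicate that, for `4 ≤ n`, is satisfied by all elements of `AltIdx n`. It iterates
`altIdx_cases` down to degree 4, where only divisibility by `|A₄| = 12` is required; of the prime
constraints on primitive groups it keeps those for 3, 5 and 7. -/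
def cand : ℕ → ℕ → Bool
  | 0, _ => false
  | n + 1, m =>
    if n + 1 ≤ 4 then decide (m ∣ 12) else
      decide (2 * m ∣ (n + 1)!) && (decide (m = 1) ||
        (decide (n + 1 ∣ m) && cand n (m / (n + 1))) ||
        decide (∃ k ∈ Finset.Icc 2 ((n + 1) / 2), (n + 1).choose k ∣ m) ||
        decide (∃ a ∈ Finset.Icc 2 n, a ∣ n + 1 ∧ blockCount a ((n + 1) / a) ∣ m) ||
        decide (2 * (n + 1) * m ∣ (n + 1)! ∧ ((n + 2) / 2)! ≤ 2 * m ∧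
          (∀ p ∈ ({3, 5, 7} : Finset ℕ), p < n + 1 → p ∣ m ∨ 2 * m ∣ (p - 1)!) ∧
          (n + 1 = 9 → 72 ≤ m) ∧ 5 ≤ m))

lemma two_mul_dvd_of_mem {n m : ℕ} (h : m ∈ AltIdx n) : 2 * m ∣ (n)! := by
  obtain ⟨G, -, hG⟩ := h
  exact ⟨_, hG.symm⟩

lemma cand_of_mem {n m : ℕ} (hn : 4 ≤ n) (h : m ∈ AltIdx n) : cand n m = true := by
  induction n, hn using Nat.le_induction generalizing m with
  | base =>
    have h1 := two_mul_dvd_of_mem h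
    simp only [cand]
    simp only [le_refl, if_true, decide_eq_true_eq]
    exact Nat.dvd_of_mul_dvd_mul_left two_pos h1
  | succ n hn ih =>
    have h1 := two_mul_dvd_of_mem h
    have h2 : ¬ n + 1 ≤ 4 := by omega
    simp only [cand, h2, if_false, Bool.and_eq_true, Bool.or_eq_true, decide_eq_true_eq]
    refine ⟨h1, ?_⟩
    rcases altIdx_cases (by omega) h with h | ⟨m', hm', rfl⟩ | ⟨k, hk, hk', hd⟩ |
      ⟨a, b, ha, hb, hab, hd⟩ | hp
    · exact Or.inl (Or.inl (Or.inl (Or.inl h)))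
    · refine Or.inl (Or.inl (Or.inl (Or.inr ⟨Dvd.intro _ rfl, ?_⟩)))
      rw [Nat.mul_div_cancel_left _ (Nat.succ_pos n)]
      exact ih hm'
    · exact Or.inl (Or.inl (Or.inr ⟨k, Finset.mem_Icc.2 ⟨hk, hk'⟩, hd⟩))
    · refine Or.inl (Or.inr ⟨a, Finset.mem_Icc.2 ⟨ha, ?_⟩, ⟨b, hab.symm⟩, ?_⟩)
      · nlinarith
      · rwa [← hab, Nat.mul_div_cancel_left _ (by omega), ← uniformBell_eq_blockCount b ha]
    · refine Or.inr ⟨hp.dvd, hp.bochert, ?_, hp.nine, hp.five⟩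
      intro p hp'
      simp only [Finset.mem_insert, Finset.mem_singleton] at hp'
      rcases hp' with rfl | rfl | rfl
      · exact hp.prime 3 (by norm_num) (by norm_num)
      · exact hp.prime 5 (by norm_num) (by norm_num)
      · exact hp.prime 7 (by norm_num) (by norm_num)

/-- The divisors of `10!/2 = 2⁷ · 3⁴ · 5² · 7`. -/
def divTen : Finset ℕ :=
  (range 8 ×ˢ range 5 ×ˢ range 3 ×ˢ range 2).image
    fun x => 2 ^ x.1 * (3 ^ x.2.1 * (5 ^ x.2.2.1 * 7 ^ x.2.2.2))

lemma mem_divTen {n m : ℕ} (hn : n ≤ 10) (h : m ∈ AltIdx n) : m ∈ divTen := by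
  have h1 : 2 * m ∣ 2 * (2 ^ 7 * (3 ^ 4 * (5 ^ 2 * 7 ^ 1))) :=
    (two_mul_dvd_of_mem h).trans (Nat.factorial_dvd_factorial hn)
  have h2 := Nat.dvd_of_mul_dvd_mul_left two_pos h1
  obtain ⟨a, r, ha, hr, rfl⟩ := Nat.dvd_mul.1 h2
  obtain ⟨b, s, hb, hs, rfl⟩ := Nat.dvd_mul.1 hr
  obtain ⟨c, d, hc, hd, rfl⟩ := Nat.dvd_mul.1 hs
  obtain ⟨a, ha, rfl⟩ := (Nat.dvd_prime_pow Nat.prime_two).1 ha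
  obtain ⟨b, hb, rfl⟩ := (Nat.dvd_prime_pow Nat.prime_three).1 hb
  obtain ⟨c, hc, rfl⟩ := (Nat.dvd_prime_pow Nat.prime_five).1 hc
  obtain ⟨d, hd, rfl⟩ := (Nat.dvd_prime_pow (by norm_num : Nat.Prime 7)).1 hd
  refine Finset.mem_image.2 ⟨(a, b, c, d), ?_, rfl⟩
  simp only [Finset.mem_product, Finset.mem_range]
  omega

/-- The sum of the reciprocals of the candidate indices, an upper bound for `𝒥(A_n)` when
`4 ≤ n ≤ 10`. -/
def candSum (n : ℕ) : ℚ := ∑ m ∈ divTen with cand n m = true, 1 / (m : ℚ)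

lemma candSum_five_to_eight : ∀ n ∈ Finset.Icc 5 8, candSum n < 11 / 6 := by
  decide +kernel

lemma candSum_nine_ten : ∀ n ∈ Finset.Icc 9 10, candSum n < 4 / 3 := by
  decide +kernel

/-! ### Sums of reciprocals and degrees 11 to 29 -/

/-- The sum of the reciprocals of the elements of a finite set of natural numbers. -/
noncomputable def recSum (s : Finset ℕ) : ℝ := ∑ m ∈ s, 1 / (m : ℝ)

lemma recSum_nonneg (s : Finset ℕ) : 0 ≤ recSum s :=
  Finset.sum_nonneg fun _ _ => by positivity

lemma recSum_mono {s t : Finset ℕ} (h : s ⊆ t) : recSum s ≤ recSum t :=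
  Finset.sum_le_sum_of_subset_of_nonneg h fun _ _ _ => by positivity

lemma recSum_union_le (s t : Finset ℕ) : recSum (s ∪ t) ≤ recSum s + recSum t := by
  have := Finset.sum_union_inter (s₁ := s) (s₂ := t) (f := fun m : ℕ => 1 / (m : ℝ))
  have h2 := recSum_nonneg (s ∩ t)
  unfold recSum at *
  linarith

lemma recSum_biUnion_le {ι : Type*} [DecidableEq ι] (s : Finset ι) (f : ι → Finset ℕ) :
    recSum (s.biUnion f) ≤ ∑ i ∈ s, recSum (f i) := by
  induction s using Finset.induction_on with
  | empty => simp [recSum]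
  | insert a s ha ih =>
    rw [Finset.biUnion_insert, Finset.sum_insert ha]
    exact (recSum_union_le _ _).trans (by gcongr)

lemma recSum_image_mul {c : ℕ} (hc : 0 < c) (s : Finset ℕ) :
    recSum (s.image (c * ·)) = recSum s / c := by
  unfold recSum
  rw [Finset.sum_image fun x _ y _ e => Nat.eq_of_mul_eq_mul_left hc e, Finset.sum_div]
  refine Finset.sum_congr rfl fun m _ => ?_
  push_cast
  rw [div_div, mul_comm]

lemma recSum_multiples_le {c N : ℕ} (hc : 0 < c) :
    recSum (N.divisors.filter (c ∣ ·)) ≤ recSum N.divisors / c := by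
  rw [← recSum_image_mul hc]
  apply recSum_mono
  intro m hm
  rw [Finset.mem_filter, Nat.mem_divisors] at hm
  obtain ⟨⟨h1, h2⟩, t, rfl⟩ := hm
  exact Finset.mem_image.2 ⟨t, Nat.mem_divisors.2 ⟨(Dvd.intro_left _ rfl).trans h1, h2⟩, rfl⟩

/-- The reciprocal as a completely multiplicative function. -/
noncomputable def recHom : ℕ →* ℝ where
  toFun n := 1 / (n : ℝ)
  map_one' := by simp
  map_mul' a b := by push_cast; field_simp

/-- The divisors of `n!` are `(n + 1)`-smooth, so the sum of their reciprocals is bounded by an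
Euler product. -/
lemma recSum_divisors_factorial_le_prod (n : ℕ) :
    recSum (n)!.divisors ≤ ∏ p ∈ (n + 1).primesBelow, (1 - 1 / (p : ℝ))⁻¹ := by
  have h := (EulerProduct.summable_and_hasSum_smoothNumbers_prod_primesBelow_geometric
    (f := recHom) (fun {p} hp => by
      have : (1 : ℝ) < p := by exact_mod_cast hp.one_lt
      change ‖1 / (p : ℝ)‖ < 1
      rw [Real.norm_of_nonneg (by positivity), div_lt_one (by positivity)]
      exact this) (n + 1)).2
  have hsub : ∀ m ∈ (n)!.divisors, m ∈ (n + 1).smoothNumbers := by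
    intro m hm
    rw [Nat.mem_divisors] at hm
    rw [Nat.mem_smoothNumbers']
    intro p hp hpm
    exact Nat.lt_succ_of_le ((hp.dvd_factorial).1 (hpm.trans hm.1))
  have h2 := sum_le_hasSum ((n)!.divisors.subtype (· ∈ (n + 1).smoothNumbers))
    (fun i _ => by change (0 : ℝ) ≤ 1 / ((i : ℕ) : ℝ); positivity) h
  refine le_trans (le_of_eq ?_) h2
  exact (Finset.sum_subtype_of_mem (p := (· ∈ (n + 1).smoothNumbers))
    (fun m : ℕ => 1 / (m : ℝ)) hsub).symm

/-- The Euler product gives `35/8` at `n = 10`, and the factor `(1 - 1/p)⁻¹ = p / (p - 1)` gained at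
a prime `p` is exactly the growth of the linear bound. -/
lemma recSum_divisors_factorial_le {n : ℕ} (hn : 10 ≤ n) :
    recSum (n)!.divisors ≤ 7 * n / 16 := by
  refine (recSum_divisors_factorial_le_prod n).trans ?_
  induction n, hn using Nat.le_induction with
  | base =>
    have : (10 + 1).primesBelow = {2, 3, 5, 7} := by decide +kernel
    rw [this]
    norm_num
  | succ n hn ih =>
    have hpos : (0 : ℝ) < n := by positivity
    by_cases hp : (n + 1).Prime
    · rw [Nat.primesBelow_succ, if_pos hp, Finset.prod_insert (by simp [Nat.primesBelow])]
      have e : (1 - 1 / ((n + 1 : ℕ) : ℝ))⁻¹ = (n + 1) / n := by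
        push_cast
        rw [one_sub_div (by positivity), inv_div, add_sub_cancel_right]
      rw [e]
      calc (n + 1 : ℝ) / n * _ ≤ (n + 1) / n * (7 * n / 16) := by gcongr
        _ = _ := by push_cast; field_simp
    · rw [Nat.primesBelow_succ, if_neg hp]
      refine ih.trans ?_
      push_cast
      linarith

open Classical in
/-- The set `AltIdx n` as a finite set. -/
noncomputable def idxFin (n : ℕ) : Finset ℕ := (n)!.divisors.filter (· ∈ AltIdx n)

lemma mem_idxFin {n m : ℕ} : m ∈ idxFin n ↔ m ∈ AltIdx n := by
  classical
  rw [idxFin, Finset.mem_filter, Nat.mem_divisors, and_iff_right_iff_imp]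
  exact fun h => ⟨(Dvd.intro_left _ rfl).trans (two_mul_dvd_of_mem h), (Nat.factorial_pos n).ne'⟩

open Classical in
/-- The divisors of `n!` satisfying the constraints for indices of primitive subgroups. -/
noncomputable def primFin (n : ℕ) : Finset ℕ := (n)!.divisors.filter (PrimIdx n ·)

/-- The recursive estimate: each class of subgroups in `altIdx_cases` contributes at most the
reciprocals of the multiples, among the divisors of `n!`, of the number attached to the class. -/
lemma recSum_idxFin_le {n : ℕ} (hn : 5 ≤ n) :
    recSum (idxFin n) ≤ 1 + recSum (idxFin (n - 1)) / n +
      recSum (n)!.divisors * (∑ k ∈ Finset.Icc 2 (n / 2), 1 / (n.choose k : ℝ) +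
        ∑ a ∈ Finset.Icc 2 (n - 1) with a ∣ n, 1 / (blockCount a (n / a) : ℝ)) +
      recSum (primFin n) := by
  classical
  let D := (n)!.divisors
  have hsub : idxFin n ⊆ ((({1} ∪ (idxFin (n - 1)).image (n * ·)) ∪
      (Finset.Icc 2 (n / 2)).biUnion fun k => D.filter (n.choose k ∣ ·)) ∪
      ((Finset.Icc 2 (n - 1)).filter (· ∣ n)).biUnion
        fun a => D.filter (blockCount a (n / a) ∣ ·)) ∪ primFin n := by
    intro m hm
    have hmD : m ∈ D := by
      rw [idxFin, Finset.mem_filter] at hm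
      exact hm.1
    rw [mem_idxFin] at hm
    simp only [Finset.mem_union, Finset.mem_biUnion, Finset.mem_image, Finset.mem_singleton,
      Finset.mem_filter, Finset.mem_Icc, primFin, mem_idxFin]
    rcases altIdx_cases hn hm with h | ⟨m', hm', rfl⟩ | ⟨k, hk, hk', hd⟩ |
      ⟨a, b, ha, hb, hab, hd⟩ | hp
    · exact Or.inl (Or.inl (Or.inl (Or.inl h)))
    · exact Or.inl (Or.inl (Or.inl (Or.inr ⟨m', hm', rfl⟩)))
    · exact Or.inl (Or.inl (Or.inr ⟨k, ⟨hk, hk'⟩, hmD, hd⟩))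
    · refine Or.inl (Or.inr ⟨a, ⟨⟨ha, ?_⟩, ⟨b, hab.symm⟩⟩, hmD, ?_⟩)
      · have : a < n := by nlinarith
        omega
      · rwa [← hab, Nat.mul_div_cancel_left _ (by omega), ← uniformBell_eq_blockCount b ha]
    · exact Or.inr ⟨hmD, hp⟩
  refine (recSum_mono hsub).trans ((recSum_union_le _ _).trans ?_)
  gcongr
  rw [mul_add, ← add_assoc]
  refine (recSum_union_le _ _).trans (add_le_add ((recSum_union_le _ _).trans
    (add_le_add ((recSum_union_le _ _).trans (add_le_add ?_ ?_)) ?_)) ?_)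
  · simp [recSum]
  · rw [recSum_image_mul (by omega)]
  · rw [Finset.mul_sum]
    refine (recSum_biUnion_le _ _).trans (Finset.sum_le_sum fun k hk => ?_)
    rw [mul_one_div]
    apply recSum_multiples_le
    rw [Finset.mem_Icc] at hk
    exact Nat.choose_pos (by omega)
  · rw [Finset.mul_sum]
    refine (recSum_biUnion_le _ _).trans (Finset.sum_le_sum fun a ha => ?_)
    rw [mul_one_div]
    apply recSum_multiples_le
    rw [Finset.mem_filter, Finset.mem_Icc] at ha
    rw [← uniformBell_eq_blockCount _ ha.1.1, Nat.pos_iff_ne_zero]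
    intro h0
    have := Nat.uniformBell_mul_eq (n / a) (n := a) (by omega)
    rw [h0] at this
    have h2 := Nat.factorial_pos (n / a * a)
    omega

/-- The alternative `2 * m ∣ (p - 1)!` in the prime constraints contradicts Bochert's bound for
`p = 3, 5`, and leaves only `m = 360` for `p = 7`. -/
lemma PrimIdx.dvd_or {n m : ℕ} (h : PrimIdx n m) (hn : 11 ≤ n) : 105 ∣ m ∨ m = 360 := by
  have h6 : (6 : ℕ)! ≤ 2 * m := (Nat.factorial_le (by omega)).trans h.bochert
  have e6 : (6 : ℕ)! = 720 := rfl
  have e2 : (3 - 1 : ℕ)! = 2 := rfl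
  have e4 : (5 - 1 : ℕ)! = 24 := rfl
  have e6' : (7 - 1 : ℕ)! = 720 := rfl
  have h3 := h.prime 3 (by norm_num) (by norm_num) (by omega)
  have h5 := h.prime 5 (by norm_num) (by norm_num) (by omega)
  have h7 := h.prime 7 (by norm_num) (by norm_num) (by omega)
  have h3' : 3 ∣ m := h3.resolve_right fun hd => by
    have := Nat.le_of_dvd (Nat.factorial_pos _) hd; omega
  have h5' : 5 ∣ m := h5.resolve_right fun hd => by
    have := Nat.le_of_dvd (Nat.factorial_pos _) hd; omega
  rcases h7 with h7 | h7
  · left; omega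
  · right
    have := Nat.le_of_dvd (Nat.factorial_pos _) h7
    omega

lemma recSum_primFin_le {n : ℕ} (hn : 11 ≤ n) :
    recSum (primFin n) ≤ recSum (n)!.divisors / 105 + 1 / 360 := by
  classical
  have hsub : primFin n ⊆ (n)!.divisors.filter (105 ∣ ·) ∪ {360} := by
    intro m hm
    rw [primFin, Finset.mem_filter] at hm
    rw [Finset.mem_union, Finset.mem_filter, Finset.mem_singleton]
    exact (hm.2.dvd_or hn).imp_left fun h => ⟨hm.1, h⟩
  refine (recSum_mono hsub).trans ((recSum_union_le _ _).trans (add_le_add ?_ ?_))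
  · exact_mod_cast recSum_multiples_le (c := 105) (by norm_num)
  · simp [recSum]

/-- The bound of `recSum_idxFin_le` with `4 / 3` in place of the sum for degree `n - 1`,
`7 * n / 16` in place of the sum over the divisors of `n!`, and the primitive groups estimated by
`recSum_primFin_le`. -/
def midBound (n : ℕ) : ℚ :=
  1 + 4 / 3 / n + 7 * n / 16 * (∑ k ∈ Finset.Icc 2 (n / 2), 1 / (n.choose k : ℚ) +
    ∑ a ∈ Finset.Icc 2 (n - 1) with a ∣ n, 1 / (blockCount a (n / a) : ℚ)) +
    (7 * n / 16 / 105 + 1 / 360)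

lemma midBound_lt : ∀ n ∈ Finset.Ico 11 30, midBound n < 4 / 3 := by
  decide +kernel

lemma recSum_idxFin_lt_mid {n : ℕ} (hn : 11 ≤ n) (hn' : n < 30)
    (ih : recSum (idxFin (n - 1)) < 4 / 3) : recSum (idxFin n) < 4 / 3 := by
  have h1 := midBound_lt n (Finset.mem_Ico.2 ⟨hn, hn'⟩)
  have h2 : ((midBound n : ℚ) : ℝ) < 4 / 3 := by
    have : ((midBound n : ℚ) : ℝ) < ((4 / 3 : ℚ) : ℝ) := by exact_mod_cast h1
    simpa using this
  refine lt_of_le_of_lt ?_ h2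
  have h3 := recSum_idxFin_le (n := n) (by omega)
  have h4 := recSum_primFin_le hn
  have h5 := recSum_divisors_factorial_le (n := n) (by omega)
  refine h3.trans ?_
  unfold midBound
  push_cast
  have hpos : (0 : ℝ) < n := by positivity
  gcongr
  refine h4.trans ?_
  gcongr

/-! ### Large degrees -/

/-- For `n ≥ 30` Bertrand's postulate provides a further prime divisor `q ≥ n / 4` of the index of
a primitive subgroup. -/
lemma recSum_primFin_le' {n : ℕ} (hn : 30 ≤ n) :
    recSum (primFin n) ≤ recSum (n)!.divisors / (105 * (n / 4)) := by
  classical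
  obtain ⟨q, hq, hq1, hq2⟩ := Nat.exists_prime_lt_and_le_two_mul ((n + 1) / 2 / 2) (by omega)
  have hsub : primFin n ⊆ (n)!.divisors.filter (105 * q ∣ ·) := by
    intro m hm
    rw [primFin, Finset.mem_filter] at hm
    rw [Finset.mem_filter]
    refine ⟨hm.1, ?_⟩
    have hb := hm.2.bochert
    have h7 : (7 : ℕ)! ≤ 2 * m := (Nat.factorial_le (by omega)).trans hb
    have e7 : (7 : ℕ)! = 5040 := rfl
    have h105 : 105 ∣ m := (hm.2.dvd_or (by omega)).resolve_right (by omega)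
    have hqm : q ∣ m := by
      refine (hm.2.prime q hq (by omega) (by omega)).resolve_right fun hd => ?_
      have h1 := Nat.le_of_dvd (Nat.factorial_pos _) hd
      have h2 : (q - 1)! < ((n + 1) / 2)! := Nat.factorial_lt_of_lt (by omega) (by omega)
      omega
    refine Nat.Coprime.mul_dvd_of_dvd_of_dvd ?_ h105 hqm
    rw [Nat.coprime_comm, hq.coprime_iff_not_dvd]
    intro hd
    rw [show 105 = 3 * (5 * 7) by norm_num, hq.dvd_mul, hq.dvd_mul] at hd
    rcases hd with hd | hd | hd <;> have := Nat.le_of_dvd (by norm_num) hd <;> omega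
  refine (recSum_mono hsub).trans ((recSum_multiples_le (by have := hq.pos; omega)).trans ?_)
  have := recSum_nonneg (n)!.divisors
  have hq' : (n : ℝ) / 4 ≤ q := by
    have : n ≤ 4 * q := by omega
    have : (n : ℝ) ≤ 4 * q := by exact_mod_cast this
    linarith
  push_cast
  gcongr

lemma choose_three_le {n k : ℕ} (h3 : 3 ≤ k) (hk : k ≤ n / 2) : n.choose 3 ≤ n.choose k := by
  induction k, h3 using Nat.le_induction with
  | base => exact le_rfl
  | succ k _ ih => exact (ih (by omega)).trans (Nat.choose_le_succ_of_lt_half_left (by omega))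

lemma cast_choose_three (n : ℕ) : (n.choose 3 : ℝ) = n * (n - 1) * (n - 2) / 6 := by
  induction n with
  | zero => simp
  | succ n ih =>
    rw [Nat.choose_succ_succ' n 2]
    push_cast
    rw [ih, Nat.cast_choose_two]
    ring

/-- The number of block systems is the product of the numbers `(p * a + a - 1).choose (a - 1)`, of
which the last one, with `p = b - 1`, suffices for `4 ≤ a`, while two are needed for `a = 3` and
three for `a = 2`. -/
lemma choose_three_le_blockCount {a b : ℕ} (ha : 2 ≤ a) (hb : 2 ≤ b) (hn : 30 ≤ a * b) :
    (a * b - 1).choose 3 ≤ blockCount a b := by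
  rw [← uniformBell_eq_blockCount b ha, Nat.uniformBell_eq]
  obtain ⟨c, rfl⟩ : ∃ c, b = c + 2 := ⟨b - 2, by omega⟩
  rw [Finset.prod_range_succ, Finset.prod_range_succ]
  have hpos : 1 ≤ ∏ p ∈ range c, (p * a + a - 1).choose (a - 1) := by
    apply Finset.one_le_prod'
    intro p _
    exact Nat.choose_pos (by omega)
  have e1 : (c + 1) * a + a - 1 = a * (c + 2) - 1 := by ring_nf
  rw [e1]
  have hpos2 : 1 ≤ (c * a + a - 1).choose (a - 1) := Nat.choose_pos (by omega)
  rcases (show a = 2 ∨ a = 3 ∨ 4 ≤ a by omega) with rfl | rfl | h4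
  · obtain ⟨d, rfl⟩ : ∃ d, c = d + 1 := ⟨c - 1, by omega⟩
    rw [Finset.prod_range_succ]
    have hpos : 1 ≤ ∏ p ∈ range d, (p * 2 + 2 - 1).choose (2 - 1) := by
      apply Finset.one_le_prod'
      intro p _
      exact Nat.choose_pos (by omega)
    have e2 : 2 * (d + 1 + 2) - 1 = 2 * d + 5 := by omega
    have e3 : (d + 1) * 2 + 2 - 1 = 2 * d + 3 := by omega
    have e4 : d * 2 + 2 - 1 = 2 * d + 1 := by omega
    rw [e2, e3, e4, show 2 - 1 = 1 from rfl, Nat.choose_one_right, Nat.choose_one_right,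
      Nat.choose_one_right]
    have h3 := cast_choose_three (2 * d + 5)
    have h4 : (((2 * d + 5).choose 3 : ℕ) : ℝ) ≤ ((2 * d + 1) * (2 * d + 3) * (2 * d + 5) : ℕ) := by
      rw [h3]
      push_cast
      have : (0 : ℝ) ≤ d := by positivity
      have hd : (12 : ℝ) ≤ d := by
        have : 12 ≤ d := by omega
        exact_mod_cast this
      nlinarith [mul_nonneg this this, mul_nonneg (mul_nonneg this this) this]
    have h5 : (2 * d + 5).choose 3 ≤ (2 * d + 1) * (2 * d + 3) * (2 * d + 5) := by exact_mod_cast h4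
    refine h5.trans ?_
    rw [mul_assoc, mul_assoc, mul_assoc]
    exact Nat.le_mul_of_pos_left _ hpos
  · have e2 : 3 * (c + 2) - 1 = 3 * c + 5 := by omega
    have e3 : c * 3 + 3 - 1 = 3 * c + 2 := by omega
    rw [e2, e3, show 3 - 1 = 2 from rfl]
    have h3 := Nat.choose_succ_right_eq (3 * c + 5) 2
    have h5 : (3 * c + 5 - 2) ≤ (3 * c + 2).choose 2 * 3 := by
      have := Nat.choose_le_choose 1 (show 3 * c + 1 ≤ 3 * c + 1 from le_rfl)
      have h6 : (3 * c + 2).choose 2 = (3 * c + 1).choose 1 + (3 * c + 1).choose 2 :=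
        Nat.choose_succ_succ' _ _
      rw [Nat.choose_one_right] at h6
      omega
    have h6 : (3 * c + 5).choose 3 ≤ (3 * c + 2).choose 2 * (3 * c + 5).choose 2 := by
      nlinarith [Nat.mul_le_mul_left ((3 * c + 5).choose 2) h5]
    refine h6.trans ?_
    rw [mul_assoc]
    exact Nat.le_mul_of_pos_left _ hpos
  · have h5 : (a * (c + 2) - 1).choose 3 ≤ (a * (c + 2) - 1).choose (a - 1) :=
      choose_three_le (by omega) (by
        have : a * 2 ≤ a * (c + 2) := Nat.mul_le_mul_left a (Nat.le_add_left 2 c)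
        omega)
    refine h5.trans ?_
    exact Nat.le_mul_of_pos_left _ (Nat.mul_pos hpos hpos2)

lemma sum_choose_le {n : ℕ} (hn : 30 ≤ n) :
    ∑ k ∈ Finset.Icc 2 (n / 2), 1 / (n.choose k : ℝ) ≤
      2 / (n * (n - 1)) + 3 / ((n - 1) * (n - 2)) := by
  have hx : (30 : ℝ) ≤ n := by exact_mod_cast hn
  have e : Finset.Icc 2 (n / 2) = insert 2 (Finset.Icc 3 (n / 2)) := by
    ext k; simp only [Finset.mem_Icc, Finset.mem_insert]; omega
  rw [e, Finset.sum_insert (by simp)]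
  apply add_le_add
  · rw [Nat.cast_choose_two, one_div_div]
  · have h1 : ∀ k ∈ Finset.Icc 3 (n / 2), 1 / (n.choose k : ℝ) ≤ 6 / (n * (n - 1) * (n - 2)) := by
      intro k hk
      rw [Finset.mem_Icc] at hk
      rw [← one_div_div _ (6 : ℝ), ← cast_choose_three]
      have : (0 : ℝ) < n.choose 3 := by exact_mod_cast Nat.choose_pos (by omega)
      have h2 : (n.choose 3 : ℝ) ≤ n.choose k := by exact_mod_cast choose_three_le hk.1 hk.2
      gcongr
    refine (Finset.sum_le_card_nsmul _ _ _ h1).trans ?_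
    rw [nsmul_eq_mul, Nat.card_Icc]
    have h2 : ((n / 2 + 1 - 3 : ℕ) : ℝ) ≤ n / 2 := by
      have : 2 * (n / 2 + 1 - 3) ≤ n := by omega
      have : (2 : ℝ) * ((n / 2 + 1 - 3 : ℕ) : ℝ) ≤ n := by exact_mod_cast this
      linarith
    have hp1 : (0 : ℝ) < n - 1 := by linarith
    have hp2 : (0 : ℝ) < n - 2 := by linarith
    calc _ ≤ (n / 2 : ℝ) * (6 / (n * (n - 1) * (n - 2))) := by gcongr
      _ = _ := by field_simp; norm_num

lemma sum_blockCount_le {n : ℕ} (hn : 30 ≤ n) :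
    ∑ a ∈ Finset.Icc 2 (n - 1) with a ∣ n, 1 / (blockCount a (n / a) : ℝ) ≤
      3 * n / ((n - 1) * (n - 2) * (n - 3)) := by
  have hx : (30 : ℝ) ≤ n := by exact_mod_cast hn
  have hp1 : (0 : ℝ) < n - 1 := by linarith
  have hp2 : (0 : ℝ) < n - 2 := by linarith
  have hp3 : (0 : ℝ) < n - 3 := by linarith
  have key : ∀ a ∈ (Finset.Icc 2 (n - 1)).filter (· ∣ n), a * (n / a) = n ∧ 2 ≤ n / a := by
    intro a ha
    rw [Finset.mem_filter, Finset.mem_Icc] at ha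
    have h1 := Nat.mul_div_cancel' ha.2
    refine ⟨h1, ?_⟩
    by_contra hlt
    have h2 : n / a ≤ 1 := by omega
    have := Nat.mul_le_mul_left a h2
    omega
  have h1 : ∀ a ∈ (Finset.Icc 2 (n - 1)).filter (· ∣ n),
      1 / (blockCount a (n / a) : ℝ) ≤ 6 / ((n - 1) * (n - 2) * (n - 3)) := by
    intro a ha
    obtain ⟨h1, h2⟩ := key a ha
    rw [Finset.mem_filter, Finset.mem_Icc] at ha
    have h3 := choose_three_le_blockCount ha.1.1 h2 (by omega)
    rw [h1] at h3
    have e : (((n - 1).choose 3 : ℕ) : ℝ) = (n - 1) * (n - 2) * (n - 3) / 6 := by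
      rw [cast_choose_three, Nat.cast_sub (by omega)]
      push_cast
      ring
    rw [← one_div_div _ (6 : ℝ), ← e]
    have : (0 : ℝ) < (n - 1).choose 3 := by exact_mod_cast Nat.choose_pos (by omega)
    have h4 : ((n - 1).choose 3 : ℝ) ≤ blockCount a (n / a) := by exact_mod_cast h3
    gcongr
  refine (Finset.sum_le_card_nsmul _ _ _ h1).trans ?_
  have hsub : (Finset.Icc 2 (n - 1)).filter (· ∣ n) ⊆ Finset.Icc 2 (n / 2) := by
    intro a ha
    obtain ⟨h1, h2⟩ := key a ha
    rw [Finset.mem_filter, Finset.mem_Icc] at ha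
    rw [Finset.mem_Icc]
    have := Nat.mul_le_mul_left a h2
    omega
  have h2 := Finset.card_le_card hsub
  rw [Nat.card_Icc] at h2
  rw [nsmul_eq_mul]
  have h3 : (((Finset.Icc 2 (n - 1)).filter (· ∣ n)).card : ℝ) ≤ n / 2 := by
    have : 2 * ((Finset.Icc 2 (n - 1)).filter (· ∣ n)).card ≤ n := by omega
    have : (2 : ℝ) * ((Finset.Icc 2 (n - 1)).filter (· ∣ n)).card ≤ n := by exact_mod_cast this
    linarith
  calc _ ≤ (n / 2 : ℝ) * (6 / ((n - 1) * (n - 2) * (n - 3))) := by gcongr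
    _ = _ := by field_simp; norm_num

/-- Besides 1, the point stabilisers and their subgroups contribute at most `2/45`, the intransitive
and imprimitive groups at most `1/6`, and the primitive groups at most `1/60`, in total less than
`1/3`. -/
lemma recSum_idxFin_lt_large {n : ℕ} (hn : 30 ≤ n)
    (ih : recSum (idxFin (n - 1)) < 4 / 3) : recSum (idxFin n) < 4 / 3 := by
  have h1 := recSum_idxFin_le (n := n) (by omega)
  have h2 := recSum_primFin_le' hn
  have h3 := recSum_divisors_factorial_le (n := n) (by omega)
  have h4 := sum_choose_le hn
  have h5 := sum_blockCount_le hn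
  have hx : (30 : ℝ) ≤ n := by exact_mod_cast hn
  set S := recSum (n)!.divisors
  set x : ℝ := (n : ℝ)
  have hp1 : (0 : ℝ) < x - 1 := by linarith
  have hp2 : (0 : ℝ) < x - 2 := by linarith
  have hp3 : (0 : ℝ) < x - 3 := by linarith
  have b1 : recSum (idxFin (n - 1)) / x ≤ 2 / 45 := by
    rw [div_le_iff₀ (by linarith)]; linarith
  have b2 : recSum (primFin n) ≤ 1 / 60 := by
    refine h2.trans ?_
    rw [div_le_iff₀ (by linarith)]
    linarith
  have hS : 0 ≤ S := recSum_nonneg _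
  have b3 : S * (2 / (x * (x - 1)) + 3 / ((x - 1) * (x - 2)) +
      3 * x / ((x - 1) * (x - 2) * (x - 3))) ≤ 1 / 6 := by
    have c1 : 2 / (x * (x - 1)) ≤ 1 / (12 * x) := by
      rw [div_le_div_iff₀ (by positivity) (by positivity)]; nlinarith
    have c2 : 3 / ((x - 1) * (x - 2)) ≤ 1 / (8 * x) := by
      rw [div_le_div_iff₀ (by positivity) (by positivity)]; nlinarith
    have c3 : 3 * x / ((x - 1) * (x - 2) * (x - 3)) ≤ 1 / (7 * x) := by
      rw [div_le_div_iff₀ (by positivity) (by positivity)]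
      nlinarith [mul_nonneg (sub_nonneg.2 hx) (sub_nonneg.2 hx),
        mul_nonneg (mul_nonneg (sub_nonneg.2 hx) (sub_nonneg.2 hx)) (sub_nonneg.2 hx)]
    calc _ ≤ 7 * x / 16 * (1 / (12 * x) + 1 / (8 * x) + 1 / (7 * x)) := by gcongr
      _ ≤ 1 / 6 := by
        have : x ≠ 0 := by positivity
        field_simp
        norm_num
  have b4 := mul_le_mul_of_nonneg_left (add_le_add h4 h5) hS
  linarith

lemma recSum_idxFin_le_candSum {n : ℕ} (hn : 4 ≤ n) (hn' : n ≤ 10) :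
    recSum (idxFin n) ≤ (candSum n : ℚ) := by
  have hsub : idxFin n ⊆ divTen.filter (cand n · = true) := by
    intro m hm
    rw [mem_idxFin] at hm
    exact Finset.mem_filter.2 ⟨mem_divTen hn' hm, cand_of_mem hn hm⟩
  refine (recSum_mono hsub).trans (le_of_eq ?_)
  rw [recSum, candSum]
  push_cast
  rfl

lemma recSum_idxFin_lt {n : ℕ} (hn : 9 ≤ n) : recSum (idxFin n) < 4 / 3 := by
  have base : ∀ n, 9 ≤ n → n ≤ 10 → recSum (idxFin n) < 4 / 3 := by
    intro n h h'
    refine lt_of_le_of_lt (recSum_idxFin_le_candSum (by omega) h') ?_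
    have := candSum_nine_ten n (Finset.mem_Icc.2 ⟨h, h'⟩)
    have h2 : ((candSum n : ℚ) : ℝ) < ((4 / 3 : ℚ) : ℝ) := by exact_mod_cast this
    simpa using h2
  induction n, hn using Nat.le_induction with
  | base => exact base 9 le_rfl (by norm_num)
  | succ n hn ih =>
    by_cases h10 : n + 1 ≤ 10
    · exact base _ (by omega) h10
    by_cases h30 : n + 1 < 30
    · exact recSum_idxFin_lt_mid (by omega) h30 ih
    · exact recSum_idxFin_lt_large (by omega) ih

lemma recSum_idxFin_lt' {n : ℕ} (hn : 5 ≤ n) : recSum (idxFin n) < 11 / 6 := by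
  by_cases h9 : 9 ≤ n
  · exact (recSum_idxFin_lt h9).trans (by norm_num)
  refine lt_of_le_of_lt (recSum_idxFin_le_candSum (by omega) (by omega)) ?_
  have := candSum_five_to_eight n (Finset.mem_Icc.2 ⟨hn, by omega⟩)
  have h2 : ((candSum n : ℚ) : ℝ) < ((11 / 6 : ℚ) : ℝ) := by exact_mod_cast this
  simpa using h2

/-! ### Comparison with `HSJ`, and degrees 3 and 4 -/

lemma range_index_subset {n : ℕ} (hn : 2 ≤ n) :
    Set.range (fun H : Subgroup (alternatingGroup (Fin n)) => H.index) ⊆ AltIdx n := by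
  rintro _ ⟨H, rfl⟩
  have : Nontrivial (Fin n) := Fin.nontrivial_iff_two_le.mpr hn
  refine ⟨H.map (alternatingGroup (Fin n)).subtype, Subgroup.map_subtype_le H, ?_⟩
  have h1 := two_mul_nat_card_alternatingGroup (α := Fin n)
  rw [Nat.card_perm, Nat.card_fin] at h1
  rw [Subgroup.card_map_of_injective (Subgroup.subtype_injective _), mul_assoc,
    H.index_mul_card, h1]

lemma HSJ_eq_recSum {G : Type*} [Group G] [Finite G] {S : Finset ℕ}
    (h : Set.range (fun H : Subgroup G => H.index) = S) : HSJ G = recSum S := by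
  rw [HSJ, h, finsum_mem_coe_finset, recSum]

lemma HSJ_le_recSum {G : Type*} [Group G] [Finite G] {S : Finset ℕ}
    (h : Set.range (fun H : Subgroup G => H.index) ⊆ S) : HSJ G ≤ recSum S := by
  have hf := S.finite_toSet.subset h
  rw [HSJ_eq_recSum hf.coe_toFinset.symm]
  exact recSum_mono fun m hm => h (hf.mem_toFinset.mp hm)

lemma HSJ_alternating_le {n : ℕ} (hn : 2 ≤ n) :
    HSJ (alternatingGroup (Fin n)) ≤ recSum (idxFin n) :=
  HSJ_le_recSum fun _ hm => mem_idxFin.mpr (range_index_subset hn hm)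

lemma HSJ_alternating_three : HSJ (alternatingGroup (Fin 3)) < 11 / 6 := by
  have hc : Nat.card (alternatingGroup (Fin 3)) = 3 := by
    rw [nat_card_alternatingGroup, Nat.card_fin]; rfl
  have h : HSJ (alternatingGroup (Fin 3)) ≤ recSum {1, 3} := by
    refine HSJ_le_recSum ?_
    rintro _ ⟨H, rfl⟩
    have h1 : H.index ∣ 3 := H.index_dvd_card.trans hc.dvd
    simpa using (Nat.dvd_prime Nat.prime_three).mp h1
  refine h.trans_lt ?_
  norm_num [recSum]

/-- `A₄` has no subgroup of index 2: such a subgroup contains all squares, hence every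
3-cycle `g = (g²)²`, and the 3-cycles generate. -/
lemma index_ne_two (H : Subgroup (alternatingGroup (Fin 4))) : H.index ≠ 2 := by
  intro h
  have h1 : H = ⊤ := by
    rw [eq_top_iff, ← alternatingGroup.closure_isThreeCycles_eq_top, Subgroup.closure_le]
    intro g hg
    have h3 : g ^ 3 = 1 := by
      apply Subtype.ext
      have := hg.orderOf ▸ pow_orderOf_eq_one (g : Perm (Fin 4))
      simpa using this
    have h4 : g = g ^ 2 * g ^ 2 := by
      rw [← pow_add, show 2 + 2 = 3 + 1 from rfl, pow_succ, h3, one_mul]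
    rw [h4]
    exact Subgroup.mul_self_mem_of_index_two h _
  rw [h1, Subgroup.index_top] at h
  omega

lemma HSJ_alternating_four : HSJ (alternatingGroup (Fin 4)) = 11 / 6 := by
  have hc : Nat.card (alternatingGroup (Fin 4)) = 12 := by
    rw [nat_card_alternatingGroup, Nat.card_fin]; rfl
  have key : ∀ (p k : ℕ), p.Prime → ∀ m, m * p ^ k = 12 →
      ∃ H : Subgroup (alternatingGroup (Fin 4)), H.index = m := by
    intro p k hp m hm
    have := Fact.mk hp
    obtain ⟨H, hH⟩ := Sylow.exists_subgroup_card_pow_prime (G := alternatingGroup (Fin 4)) p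
      (n := k) (by rw [hc, ← hm]; exact Dvd.intro_left m rfl)
    refine ⟨H, ?_⟩
    have h1 := H.index_mul_card
    rw [hH, hc, ← hm] at h1
    exact Nat.eq_of_mul_eq_mul_right (Nat.pow_pos hp.pos) h1
  have h : Set.range (fun H : Subgroup (alternatingGroup (Fin 4)) => H.index) =
      (({1, 3, 4, 6, 12} : Finset ℕ) : Set ℕ) := by
    ext m
    constructor
    · rintro ⟨H, rfl⟩
      have h1 : H.index ∈ Nat.divisors 12 := by simpa using H.index_dvd_card.trans hc.dvd
      rw [show Nat.divisors 12 = {1, 2, 3, 4, 6, 12} from rfl] at h1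
      have h2 := index_ne_two H
      simp only [Finset.mem_insert, Finset.mem_singleton, Finset.coe_insert,
        Finset.coe_singleton, Set.mem_insert_iff, Set.mem_singleton_iff] at h1 ⊢
      tauto
    · intro hm
      simp only [Finset.coe_insert, Finset.coe_singleton, Set.mem_insert_iff,
        Set.mem_singleton_iff] at hm
      rcases hm with rfl | rfl | rfl | rfl | rfl
      · exact ⟨⊤, Subgroup.index_top⟩
      · exact key 2 2 Nat.prime_two 3 rfl
      · exact key 3 1 Nat.prime_three 4 rfl
      · exact key 2 1 Nat.prime_two 6 rfl
      · exact key 2 0 Nat.prime_two 12 rfl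
  rw [HSJ_eq_recSum h]
  norm_num [recSum]

end HelperLemmas

/-- For `n ≥ 3`, `𝒥(A_n) ≤ 11/6` with equality iff `n = 4`, and `𝒥(A_n) < 4/3` for
`n ≥ 9`. -/
theorem HSJ_alternating_group (n : ℕ) (hn : 3 ≤ n) :
    HSJ (alternatingGroup (Fin n)) ≤ 11 / 6 ∧
      (HSJ (alternatingGroup (Fin n)) = 11 / 6 ↔ n = 4) ∧
      (9 ≤ n → HSJ (alternatingGroup (Fin n)) < 4 / 3) := by
  have h9 : 9 ≤ n → HSJ (alternatingGroup (Fin n)) < 4 / 3 := fun h =>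
    (HSJ_alternating_le (by omega)).trans_lt (recSum_idxFin_lt h)
  have hlt : n ≠ 4 → HSJ (alternatingGroup (Fin n)) < 11 / 6 := by
    intro h4
    rcases hn.eq_or_lt with rfl | h
    · exact HSJ_alternating_three
    · exact (HSJ_alternating_le (by omega)).trans_lt (recSum_idxFin_lt' (by omega))
  have heq : n = 4 → HSJ (alternatingGroup (Fin n)) = 11 / 6 := by
    rintro rfl
    exact HSJ_alternating_four
  refine ⟨?_, ⟨fun h => ?_, heq⟩, h9⟩
  · by_cases h4 : n = 4
    · exact (heq h4).le
    · exact (hlt h4).le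
  · by_contra h4
    exact (hlt h4).ne h
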